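/- The 1D aTAM is not intrinsically universal: there is no tile set U of 1-dimensional tile types, temperature τ' ∈ ℤ⁺, and computable functions ℛ and S such that for every 1D aTAM system 𝒯 there is m ∈ ℕ for which 𝒰_𝒯 = (U, S(𝒯), τ') simulates 𝒯 at scale m under ℛ(𝒯). -/

import Mathlib

open scoped Classical

noncomputable section

namespace ATAM

/-- A glue: a label (a finite string over the alphabet) together with a
nonnegative integer strength. -/
abbrev Glue : Type := String × ℕ

/-- A `d`-dimensional tile type: for each of the `d` axes, a glue on the
positive face and a glue on the negative face (`2d` glues in total). -/
abbrev TileType (d : ℕ) : Type := Fin d → Glue × Glue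

/-- Points of the integer lattice `ℤ^d`. -/
abbrev Pt (d : ℕ) : Type := Fin d → ℤ

/-- A configuration: a partial placement of tile types on `ℤ^d`. -/
abbrev Config (d : ℕ) : Type := Pt d → Option (TileType d)

variable {d : ℕ}

/-- The domain of a configuration. -/
def dom (α : Config d) : Set (Pt d) := {p | α p ≠ none}

/-- Grid-graph adjacency on `ℤ^d` (Euclidean, equivalently `ℓ¹`, distance one). -/
def adj (p q : Pt d) : Prop := (∑ i, |p i - q i|) = 1

/-- A set of lattice points is connected in the grid graph of `ℤ^d`. -/
def ConnectedSet (S : Set (Pt d)) : Prop :=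
  ∀ p ∈ S, ∀ q ∈ S,
    Relation.ReflTransGen (fun a b => adj a b ∧ a ∈ S ∧ b ∈ S) p q

/-- The strength with which a tile of type `t` at `p` and a tile of type `t'`
at `q` interact: nonzero only if `p` and `q` are adjacent and the abutting
glues are equal (in label and strength) with positive strength. -/
def bond (t t' : TileType d) (p q : Pt d) : ℕ :=
  ∑ i : Fin d,
    ((if q = Function.update p i (p i + 1) ∧ (t i).1 = (t' i).2 ∧ 0 < (t i).1.2
        then (t i).1.2 else 0) +
     (if p = Function.update q i (q i + 1) ∧ (t i).2 = (t' i).1 ∧ 0 < (t i).2.2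
        then (t i).2.2 else 0))

/-- The strength of the bond between positions `p` and `q` in configuration `α`. -/
def bondAt (α : Config d) (p q : Pt d) : ℕ :=
  match α p, α q with
  | some t, some t' => bond t t' p q
  | _, _ => 0

/-- `α` is `τ`-stable: every cut of its binding graph has weight at least `τ`. -/
def Stable (τ : ℕ) (α : Config d) : Prop :=
  ∀ A B : Set (Pt d), A.Nonempty → B.Nonempty → Disjoint A B → A ∪ B = dom α →
    ∃ F : Finset (Pt d × Pt d),
      (∀ e ∈ F, e.1 ∈ A ∧ e.2 ∈ B) ∧ τ ≤ ∑ e ∈ F, bondAt α e.1 e.2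

/-- `β` extends `α`, i.e. `α` is a subassembly of `β` (`α ⊑ β`). -/
def Extends (α β : Config d) : Prop := ∀ p t, α p = some t → β p = some t

/-- A `d`-dimensional tile assembly system `(T, σ, τ)`: a finite tile set, a
finite `τ`-stable seed assembly over the tile set, and a temperature `τ ≥ 1`. -/
structure TAS (d : ℕ) where
  tileset : Finset (TileType d)
  seed : Config d
  temp : ℕ
  temp_pos : 0 < temp
  seed_nonempty : (dom seed).Nonempty
  seed_connected : ConnectedSet (dom seed)
  seed_finite : (dom seed).Finite
  seed_tiles : ∀ p t, seed p = some t → t ∈ tileset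
  seed_stable : Stable temp seed

/-- One step of the (unrestricted) aTAM: a single tile of the tile set
`τ`-stably attaches at an empty location. -/
def Attach (T : TAS d) (α β : Config d) : Prop :=
  ∃ p t, p ∉ dom α ∧ t ∈ T.tileset ∧
    β = Function.update α p (some t) ∧ Stable T.temp β

/-- `q` lies outside the minimal bounding box of `α`. -/
def OutsideBBox (α : Config d) (q : Pt d) : Prop :=
  ∃ i : Fin d, (∀ p ∈ dom α, q i < p i) ∨ (∀ p ∈ dom α, p i < q i)

/-- There is a diffusion path for `p` with respect to `α`: a path in the grid
graph of `ℤ^d` from `p` to a point outside the minimal bounding box of `α`,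
none of whose points lies in `dom α`. -/
def HasDiffusionPath (α : Config d) (p : Pt d) : Prop :=
  ∃ (k : ℕ) (x : ℕ → Pt d), x 0 = p ∧ (∀ j < k, adj (x j) (x (j + 1))) ∧
    (∀ j ≤ k, x j ∉ dom α) ∧ OutsideBBox α (x k)

/-- One step of the diffusion-restricted aTAM: additionally the attachment
location must admit a diffusion path. -/
def AttachD (T : TAS d) (α β : Config d) : Prop :=
  ∃ p t, p ∉ dom α ∧ t ∈ T.tileset ∧ HasDiffusionPath α p ∧
    β = Function.update α p (some t) ∧ Stable T.temp β

/-- A (possibly stuttering) chain of single-tile attachment steps with respect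
to the attachment relation `A`. -/
def Chain (A : Config d → Config d → Prop) (f : ℕ → Config d) : Prop :=
  ∀ n, f n = f (n + 1) ∨ A (f n) (f (n + 1))

/-- `β` is the (limiting) result of the sequence `f`. -/
def Limit (f : ℕ → Config d) (β : Config d) : Prop :=
  ∀ p t, β p = some t ↔ ∃ n, f n p = some t

/-- `β` is producible from `α` by zero or more (possibly infinitely many)
single-tile attachment steps, with respect to the attachment relation `A`. -/
def ProducesFrom (A : Config d → Config d → Prop) (α β : Config d) : Prop :=
  ∃ f : ℕ → Config d, f 0 = α ∧ Chain A f ∧ Limit f β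

/-- `α` admits no attachment step: it is terminal. -/
def Terminal (A : Config d → Config d → Prop) (α : Config d) : Prop :=
  ∀ β, ¬ A α β

/-- The system with seed `σ` and attachment relation `A` is directed: it has
exactly one producible terminal assembly. -/
def DirectedSys (A : Config d → Config d → Prop) (σ : Config d) : Prop :=
  ∃! α, ProducesFrom A σ α ∧ Terminal A α

/-- The `m`-block macrotile of `α` at block position `x`. -/
def mblock (m : ℕ) (α : Config d) (x : Pt d) : Config d :=
  fun y => if ∀ i, 0 ≤ y i ∧ y i < (m : ℤ) then α (fun i => (m : ℤ) * x i + y i) else none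

/-- A (partial) macrotile representation function. -/
abbrev RepFn (d : ℕ) : Type := Config d → Option (TileType d)

/-- `R` is a valid macrotile representation function into the tile set `Tset`:
it is monotone with respect to the subassembly relation on macrotiles, and its
values are tile types of `Tset`. -/
def ValidRep (Tset : Finset (TileType d)) (R : RepFn d) : Prop :=
  (∀ γ γ', Extends γ γ' → ∀ t, R γ = some t → R γ' = some t) ∧
  (∀ γ t, R γ = some t → t ∈ Tset)

/-- The induced assembly representation function `R*`. -/
def repStar (R : RepFn d) (m : ℕ) (α' : Config d) : Config d :=
  fun x => R (mblock m α' x)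

/-- Block position `x` holds a nonempty `m`-block of `α'`. -/
def NonemptyBlock (m : ℕ) (α' : Config d) (x : Pt d) : Prop :=
  ∃ y, mblock m α' x y ≠ none

/-- `α'` maps cleanly to `R*(α')`: every nonempty block position lies in the
domain of `R*(α')` or is (non-diagonally) adjacent to a point of that domain,
or `α'` has at most one nonempty block. -/
def MapsCleanly (R : RepFn d) (m : ℕ) (α' : Config d) : Prop :=
  (∀ x, NonemptyBlock m α' x →
      repStar R m α' x ≠ none ∨ ∃ u, adj x u ∧ repStar R m α' u ≠ none) ∨
  (∃ x₀, ∀ x, NonemptyBlock m α' x → x = x₀)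

/-- The system with attachment relation `A_S` and seed `σ_S` simulates the
system with attachment relation `A_T` and seed `σ_T` at scale `m` under the
representation function `R`: they have equivalent productions, the simulated
system follows the simulator, and the simulator models the simulated system. -/
structure SimulatesVia (A_T : Config d → Config d → Prop) (σ_T : Config d)
    (A_S : Config d → Config d → Prop) (σ_S : Config d)
    (R : RepFn d) (m : ℕ) : Prop where
  /-- `{R*(α') : α' ∈ 𝒜[𝒮]} = 𝒜[𝒯]` -/
  prod_eq : ∀ α, ProducesFrom A_T σ_T α ↔
      ∃ α', ProducesFrom A_S σ_S α' ∧ repStar R m α' = α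
  /-- `{R*(α') : α' ∈ 𝒜□[𝒮]} = 𝒜□[𝒯]` -/
  term_eq : ∀ α, (ProducesFrom A_T σ_T α ∧ Terminal A_T α) ↔
      ∃ α', (ProducesFrom A_S σ_S α' ∧ Terminal A_S α') ∧ repStar R m α' = α
  /-- every producible assembly of the simulator maps cleanly -/
  clean : ∀ α', ProducesFrom A_S σ_S α' → MapsCleanly R m α'
  /-- `𝒯` follows `𝒮` -/
  follows : ∀ α' β', ProducesFrom A_S σ_S α' → ProducesFrom A_S σ_S β' →
      ProducesFrom A_S α' β' →
      ProducesFrom A_T (repStar R m α') (repStar R m β')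
  /-- `𝒮` models `𝒯` -/
  models : ∀ α, ProducesFrom A_T σ_T α → ∃ Ps : Set (Config d),
      (∀ α' ∈ Ps, ProducesFrom A_S σ_S α' ∧ repStar R m α' = α) ∧
      ∀ β, ProducesFrom A_T σ_T β → ProducesFrom A_T α β →
        (∀ α' ∈ Ps, ∃ β', ProducesFrom A_S α' β' ∧ repStar R m β' = β) ∧
        (∀ α'' β', ProducesFrom A_S σ_S α'' → repStar R m α'' = α →
            ProducesFrom A_S α'' β' → repStar R m β' = β →
            ∃ α' ∈ Ps, ProducesFrom A_S α' α'')

/-- `US` simulates `T` at scale `m` under `R`, both with the standard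
(unrestricted) aTAM dynamics. -/
def Simulates (US T : TAS d) (R : RepFn d) (m : ℕ) : Prop :=
  SimulatesVia (Attach T) T.seed (Attach US) US.seed R m

/-- `US` simulates `T` at scale `m` under `R`, both with the
diffusion-restricted dynamics. -/
def SimulatesD (US T : TAS d) (R : RepFn d) (m : ℕ) : Prop :=
  SimulatesVia (AttachD T) T.seed (AttachD US) US.seed R m

end ATAM

open ATAM

namespace ATAM

/-- The point of `ℤ^1` with coordinate `z`. -/
def pt (z : ℤ) : Pt 1 := fun _ => z

theorem pt_eta (p : Pt 1) : p = pt (p 0) := by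
  funext i; fin_cases i; rfl

@[simp] theorem pt_apply (z : ℤ) (i : Fin 1) : pt z i = z := rfl

theorem pt_inj {a b : ℤ} : pt a = pt b ↔ a = b :=
  ⟨fun h => congrFun h 0, fun h => h ▸ rfl⟩

theorem update_pt (p : Pt 1) (i : Fin 1) (z : ℤ) : Function.update p i z = pt z := by
  funext j; fin_cases j; fin_cases i; simp [pt]

/-- `t` binds to an eastern neighbour `t'` with strength at least `τ`. -/
def East (τ : ℕ) (t t' : TileType 1) : Prop :=
  (t 0).1 = (t' 0).2 ∧ τ ≤ (t 0).1.2

theorem mem_dom {α : Config 1} {p : Pt 1} : p ∈ dom α ↔ ∃ t, α p = some t := by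
  simp [dom, Option.ne_none_iff_exists']

theorem bond_east {τ : ℕ} (hτ : 0 < τ) {t t' : TileType 1} (h : East τ t t') (i : ℤ) :
    τ ≤ bond t t' (pt i) (pt (i + 1)) := by
  obtain ⟨h1, h2⟩ := h
  have h3 : 0 < (t 0).1.2 := by omega
  simp only [bond, update_pt, Fin.sum_univ_one, pt_apply]
  rw [if_pos ⟨trivial, h1, h3⟩]
  omega

theorem bond_west {τ : ℕ} (hτ : 0 < τ) {t t' : TileType 1} (h : East τ t t') (i : ℤ) :
    τ ≤ bond t' t (pt (i + 1)) (pt i) := by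
  obtain ⟨h1, h2⟩ := h
  have h3 : 0 < (t 0).1.2 := by omega
  simp only [bond, update_pt, Fin.sum_univ_one, pt_apply]
  rw [if_pos (c := True ∧ (t' 0).2 = (t 0).1 ∧ 0 < (t' 0).2.2)
    ⟨trivial, h1.symm, by rw [← h1]; exact h3⟩]
  rw [← h1]
  omega

theorem bond_lt {t t' : TileType 1} {a b : ℤ} (hab : a < b) (h : bond t t' (pt a) (pt b) ≠ 0) :
    b = a + 1 ∧ (t 0).1 = (t' 0).2 ∧ bond t t' (pt a) (pt b) = (t 0).1.2 := by
  simp only [bond, update_pt, Fin.sum_univ_one, pt_apply, pt_inj] at h ⊢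
  rw [if_neg (c := a = b + 1 ∧ _) (by omega)] at h ⊢
  split_ifs at h ⊢ with h1
  · exact ⟨h1.1, h1.2.1, rfl⟩
  · simp at h

theorem bondAt_some {α : Config 1} {p q : Pt 1} {t t' : TileType 1}
    (h : α p = some t) (h' : α q = some t') : bondAt α p q = bond t t' p q := by
  simp [bondAt, h, h']

theorem bondAt_ne {α : Config 1} {p q : Pt 1} (h : bondAt α p q ≠ 0) :
    ∃ t t', α p = some t ∧ α q = some t' := by
  unfold bondAt at h
  split at h
  · exact ⟨_, _, by assumption, by assumption⟩
  · exact absurd rfl h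

/-- A stable assembly that straddles the cut between `i` and `i+1` is bound there. -/
theorem cut {τ : ℕ} (hτ : 0 < τ) {α : Config 1} (hs : Stable τ α) {x y i : ℤ}
    (hx : pt x ∈ dom α) (hy : pt y ∈ dom α) (hxi : x ≤ i) (hiy : i < y) :
    ∃ t t', α (pt i) = some t ∧ α (pt (i + 1)) = some t' ∧ East τ t t' := by
  obtain ⟨F, hF, hsum⟩ := hs {p | p ∈ dom α ∧ p 0 ≤ i} {p | p ∈ dom α ∧ i < p 0}
    ⟨pt x, hx, hxi⟩ ⟨pt y, hy, hiy⟩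
    (by rw [Set.disjoint_left]; rintro p ⟨_, h1⟩ ⟨_, h2⟩; omega)
    (by
      ext p
      simp only [Set.mem_union, Set.mem_ofPred_eq]
      constructor
      · rintro (h | h) <;> exact h.1
      · intro h
        rcases le_or_gt (p 0) i with h1 | h1
        · exact Or.inl ⟨h, h1⟩
        · exact Or.inr ⟨h, h1⟩)
  have key : ∀ e ∈ F, bondAt α e.1 e.2 ≠ 0 → e = (pt i, pt (i + 1)) := by
    rintro ⟨p, q⟩ he hne
    obtain ⟨⟨-, h1⟩, ⟨-, h2⟩⟩ := hF _ he
    simp only at h1 h2 hne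
    obtain ⟨t, t', ht, ht'⟩ := bondAt_ne hne
    rw [bondAt_some ht ht', pt_eta p, pt_eta q] at hne
    have := (bond_lt (by omega) hne).1
    rw [pt_eta p, pt_eta q, this]
    have : p 0 = i := by omega
    rw [this]
  have hle : ∑ e ∈ F, bondAt α e.1 e.2 ≤ bondAt α (pt i) (pt (i + 1)) := by
    calc ∑ e ∈ F, bondAt α e.1 e.2
        ≤ ∑ e ∈ F, if e = (pt i, pt (i + 1)) then bondAt α (pt i) (pt (i + 1)) else 0 := by
          apply Finset.sum_le_sum
          intro e he
          split_ifs with h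
          · rw [h]
          · by_contra hc
            exact h (key e he (by omega))
      _ ≤ _ := by
          rw [Finset.sum_ite_eq']
          split_ifs <;> simp
  have hne : bondAt α (pt i) (pt (i + 1)) ≠ 0 := by omega
  obtain ⟨t, t', ht, ht'⟩ := bondAt_ne hne
  rw [bondAt_some ht ht'] at hne hle
  obtain ⟨-, h1, h2⟩ := bond_lt (by omega) hne
  exact ⟨t, t', ht, ht', h1, by omega⟩

/-- Extending a stable assembly at its east end. -/
theorem stable_extend {τ : ℕ} (hτ : 0 < τ) {α : Config 1} (hs : Stable τ α) {i : ℤ}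
    {t t' : TileType 1} (ht : α (pt i) = some t) (hn : pt (i + 1) ∉ dom α)
    (hE : East τ t t') : Stable τ (Function.update α (pt (i + 1)) (some t')) := by
  intro A B hA hB hd hU
  have hne : pt i ≠ pt (i + 1) := by rw [Ne, pt_inj]; omega
  have hdom : A ∪ B = insert (pt (i + 1)) (dom α) := by
    rw [hU]; ext p
    by_cases h : p = pt (i + 1)
    · subst h; simp [dom]
    · simp [dom, h]
  have hiU : pt i ∈ A ∪ B := by
    rw [hdom]; exact Or.inr (mem_dom.2 ⟨t, ht⟩)
  have e1 : Function.update α (pt (i + 1)) (some t') (pt i) = some t := by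
    rw [Function.update_of_ne hne, ht]
  have e2 : Function.update α (pt (i + 1)) (some t') (pt (i + 1)) = some t' := by simp
  by_cases hA' : (A \ {pt (i + 1)}).Nonempty
  · by_cases hB' : (B \ {pt (i + 1)}).Nonempty
    · obtain ⟨F, hF, hsum⟩ := hs _ _ hA' hB'
        (hd.mono Set.sdiff_subset Set.sdiff_subset)
        (by
          rw [← Set.union_sdiff_distrib, hdom]
          ext p
          simp only [Set.mem_sdiff, Set.mem_insert_iff, Set.mem_singleton_iff]
          constructor
          · rintro ⟨h | h, h'⟩
            · exact absurd h h'
            · exact h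
          · intro h
            exact ⟨Or.inr h, fun hh => hn (hh ▸ h)⟩)
      refine ⟨F, fun e he => ⟨(hF e he).1.1, (hF e he).2.1⟩, hsum.trans (le_of_eq ?_)⟩
      apply Finset.sum_congr rfl
      intro e he
      have h1 : e.1 ≠ pt (i + 1) := (hF e he).1.2
      have h2 : e.2 ≠ pt (i + 1) := (hF e he).2.2
      simp only [bondAt, Function.update_of_ne h1, Function.update_of_ne h2]
    · have hiB : pt i ∉ B := fun h => hB' ⟨_, h, hne⟩
      have hiA : pt i ∈ A := hiU.resolve_right hiB
      have hjB : pt (i + 1) ∈ B := by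
        obtain ⟨b, hb⟩ := hB
        by_cases h : b = pt (i + 1)
        · exact h ▸ hb
        · exact absurd ⟨b, hb, h⟩ hB'
      refine ⟨{(pt i, pt (i + 1))}, ?_, ?_⟩
      · intro e he
        rw [Finset.mem_singleton] at he
        subst he; exact ⟨hiA, hjB⟩
      · rw [Finset.sum_singleton, bondAt_some e1 e2]
        exact bond_east hτ hE i
  · have hiA : pt i ∉ A := fun h => hA' ⟨_, h, hne⟩
    have hiB : pt i ∈ B := hiU.resolve_left hiA
    have hjA : pt (i + 1) ∈ A := by
      obtain ⟨b, hb⟩ := hA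
      by_cases h : b = pt (i + 1)
      · exact h ▸ hb
      · exact absurd ⟨b, hb, h⟩ hA'
    refine ⟨{(pt (i + 1), pt i)}, ?_, ?_⟩
    · intro e he
      rw [Finset.mem_singleton] at he
      subst he; exact ⟨hjA, hiB⟩
    · rw [Finset.sum_singleton, bondAt_some e2 e1]
      exact bond_west hτ hE i

/-- Finite growth sequences. -/
abbrev Reach (T : TAS 1) : Config 1 → Config 1 → Prop := Relation.ReflTransGen (Attach T)

theorem Attach.ext {T : TAS 1} {α β : Config 1} (h : Attach T α β) : Extends α β := by
  obtain ⟨p, t, hp, -, rfl, -⟩ := h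
  intro q s hq
  have : q ≠ p := by rintro rfl; exact hp (mem_dom.2 ⟨s, hq⟩)
  rw [Function.update_of_ne this, hq]

theorem Reach.ext {T : TAS 1} {α β : Config 1} (h : Reach T α β) : Extends α β := by
  induction h with
  | refl => exact fun p t h => h
  | tail _ h2 ih => exact fun p t h => h2.ext p t (ih p t h)

theorem Reach.produces {T : TAS 1} {α β : Config 1} (h : Reach T α β) :
    ProducesFrom (Attach T) α β := by
  induction h using Relation.ReflTransGen.head_induction_on with
  | refl => exact ⟨fun _ => β, rfl, fun _ => Or.inl rfl, fun p t => by simp⟩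
  | @head a c h1 h2 ih =>
    obtain ⟨f, hf0, hfc, hfl⟩ := ih
    refine ⟨fun n => Nat.casesOn n a f, rfl, ?_, ?_⟩
    · rintro (_ | n)
      · right; simpa [hf0] using h1
      · exact hfc n
    · intro p t
      rw [hfl]
      constructor
      · rintro ⟨n, hn⟩; exact ⟨n + 1, hn⟩
      · rintro ⟨_ | n, hn⟩
        · exact ⟨0, by rw [hf0]; exact h1.ext p t hn⟩
        · exact ⟨n, hn⟩

theorem chain_reach {T : TAS 1} {f : ℕ → Config 1} (h : Chain (Attach T) f) (n : ℕ) :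
    Reach T (f 0) (f n) := by
  induction n with
  | zero => exact .refl
  | succ n ih =>
    rcases h n with h1 | h1
    · rw [← h1]; exact ih
    · exact ih.tail h1

/-- Every tile of a producible assembly appears in a finite producible assembly. -/
theorem ProducesFrom.stage {T : TAS 1} {α β : Config 1} (h : ProducesFrom (Attach T) α β)
    {p : Pt 1} {t : TileType 1} (hp : β p = some t) : ∃ γ, Reach T α γ ∧ γ p = some t := by
  obtain ⟨f, rfl, hc, hl⟩ := h
  obtain ⟨n, hn⟩ := (hl p t).1 hp
  exact ⟨f n, chain_reach hc n, hn⟩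

theorem ProducesFrom.ext {T : TAS 1} {α β : Config 1} (h : ProducesFrom (Attach T) α β) :
    Extends α β := by
  obtain ⟨f, rfl, hc, hl⟩ := h
  exact fun p t h => (hl p t).2 ⟨0, h⟩

theorem reach_stable {T : TAS 1} {α : Config 1} (h : Reach T T.seed α) : Stable T.temp α := by
  cases h with
  | refl => exact T.seed_stable
  | tail _ h2 => obtain ⟨p, t, -, -, -, h⟩ := h2; exact h

theorem reach_tiles {T : TAS 1} {α : Config 1} (h : Reach T T.seed α) :
    ∀ p t, α p = some t → t ∈ T.tileset := by
  induction h with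
  | refl => exact T.seed_tiles
  | tail _ h2 ih =>
    obtain ⟨p, t, -, ht, rfl, h⟩ := h2
    intro q s hq
    by_cases hqp : q = p
    · subst hqp
      simp only [Function.update_self, Option.some.injEq] at hq
      exact hq ▸ ht
    · rw [Function.update_of_ne hqp] at hq
      exact ih q s hq

/-- `α` is finite-producible, its eastmost tile is `t`, at position `i`. -/
def Tip (T : TAS 1) (α : Config 1) (i : ℤ) (t : TileType 1) : Prop :=
  Reach T T.seed α ∧ α (pt i) = some t ∧ ∀ q, pt q ∈ dom α → q ≤ i

theorem Tip.step {T : TAS 1} {α : Config 1} {i : ℤ} {t t' : TileType 1} (h : Tip T α i t)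
    (hE : East T.temp t t') (ht' : t' ∈ T.tileset) :
    Tip T (Function.update α (pt (i + 1)) (some t')) (i + 1) t' := by
  obtain ⟨h1, h2, h3⟩ := h
  have hn : pt (i + 1) ∉ dom α := fun h => by have := h3 _ h; omega
  refine ⟨h1.tail ⟨_, t', hn, ht', rfl,
    stable_extend T.temp_pos (reach_stable h1) h2 hn hE⟩, by simp, ?_⟩
  intro q hq
  by_cases hqi : q = i + 1
  · omega
  · have : pt q ≠ pt (i + 1) := by rwa [Ne, pt_inj]
    have hq' : pt q ∈ dom α := by simpa [dom, Function.update_of_ne this] using hq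
    have := h3 q hq'
    omega

theorem exists_tip {T : TAS 1} {L s : ℤ} (hL : ∀ q, pt q ∈ dom T.seed → q < L)
    (hs : pt s ∈ dom T.seed) {γ : Config 1} (h : Reach T T.seed γ) {i : ℤ} {t : TileType 1}
    (hi : L ≤ i) (ht : γ (pt i) = some t) : ∃ α, Tip T α i t := by
  induction h with
  | refl => have := hL i (mem_dom.2 ⟨t, ht⟩); omega
  | @tail b c h1 h2 ih =>
    by_cases hb : pt i ∈ dom b
    · obtain ⟨t', ht'⟩ := mem_dom.1 hb
      have := h2.ext _ _ ht'
      rw [ht] at this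
      exact ih (by rw [ht', this])
    · refine ⟨c, h1.tail h2, ht, ?_⟩
      intro q hq
      by_contra hc
      push Not at hc
      obtain ⟨p, t'', hp, -, rfl, -⟩ := h2
      have hip : pt i = p := by
        by_contra hne
        rw [Function.update_of_ne hne] at ht
        exact hb (mem_dom.2 ⟨t, ht⟩)
      subst hip
      have hne : pt q ≠ pt i := by rw [Ne, pt_inj]; omega
      have hq' : pt q ∈ dom b := by simpa [dom, Function.update_of_ne hne] using hq
      obtain ⟨t0, ht0⟩ := mem_dom.1 hs
      obtain ⟨u, u', hu, -⟩ := cut T.temp_pos (reach_stable h1) (x := s) (y := q) (i := i)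
        (mem_dom.2 ⟨t0, Reach.ext h1 _ _ ht0⟩) hq' (by have := hL s hs; omega) hc
      exact hb (mem_dom.2 ⟨u, hu⟩)

/-- Pumping: if a growth eastwards of the seed is longer than the number of tile types,
then the assembly can grow arbitrarily far east. -/
theorem pump {T : TAS 1} {L s : ℤ} (hL : ∀ q, pt q ∈ dom T.seed → q < L)
    (hs : pt s ∈ dom T.seed) {γ : Config 1} (h : Reach T T.seed γ) {y : ℤ}
    (hy : pt y ∈ dom γ) (hyL : L + T.tileset.card < y) (M : ℤ) (hM : y ≤ M) :
    ∃ α t, Tip T α M t := by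
  have hstab := reach_stable h
  have hsγ : pt s ∈ dom γ := by
    obtain ⟨t0, ht0⟩ := mem_dom.1 hs
    exact mem_dom.2 ⟨t0, Reach.ext h _ _ ht0⟩
  have hsL := hL s hs
  have hcut : ∀ k : ℕ, k ≤ T.tileset.card →
      ∃ t t', γ (pt (L + k)) = some t ∧ γ (pt (L + k + 1)) = some t' ∧ East T.temp t t' :=
    fun k hk => cut T.temp_pos hstab hsγ hy (by omega) (by omega)
  set g : ℕ → TileType 1 := fun k => (γ (pt (L + k))).getD default with hg
  have hgs : ∀ k : ℕ, k ≤ T.tileset.card → γ (pt (L + k)) = some (g k) := by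
    intro k hk
    obtain ⟨t, t', h1, h2, h3⟩ := hcut k hk
    simp [hg, h1]
  have hgE : ∀ k : ℕ, k + 1 ≤ T.tileset.card → East T.temp (g k) (g (k + 1)) := by
    intro k hk
    obtain ⟨t, t', h1, h2, h3⟩ := hcut k (by omega)
    have e1 := hgs k (by omega)
    have e2 := hgs (k + 1) hk
    rw [h1] at e1
    push_cast at e2
    rw [← add_assoc, h2] at e2
    rw [← Option.some.inj e1, ← Option.some.inj e2]
    exact h3
  obtain ⟨a, ha, b, hb, hab, hgab⟩ :=
    Finset.exists_ne_map_eq_of_card_lt_of_maps_to (s := Finset.range (T.tileset.card + 1))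
      (t := T.tileset) (by simp) (f := g) (by
        intro k hk
        have hk : k < T.tileset.card + 1 := by simpa using hk
        exact reach_tiles h _ _ (hgs k (by omega)))
  simp only [Finset.mem_range] at ha hb
  wlog hlt : a < b generalizing a b
  · exact this b a hab.symm hgab.symm hb ha (by omega)
  have hmem : ∀ k : ℕ, k ≤ T.tileset.card → g k ∈ T.tileset :=
    fun k hk => reach_tiles h _ _ (hgs k hk)
  have hP : 0 < b - a := by omega
  have main : ∀ k : ℕ, ∃ α, Tip T α (L + a + k) (g (a + k % (b - a))) := by
    intro k
    induction k with
    | zero =>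
      obtain ⟨α, hα⟩ := exists_tip hL hs h (i := L + a) (by omega) (hgs a (by omega))
      exact ⟨α, by simpa using hα⟩
    | succ k ih =>
      obtain ⟨α, hα⟩ := ih
      have hlt' := Nat.mod_lt k hP
      have hE := hgE (a + k % (b - a)) (by omega)
      have hnext : g (a + k % (b - a) + 1) = g (a + (k + 1) % (b - a)) := by
        by_cases hw : k % (b - a) + 1 = b - a
        · have : (k + 1) % (b - a) = 0 := by
            rw [Nat.add_mod, ← Nat.add_mod, ← Nat.mod_add_mod, hw, Nat.mod_self]
          rw [this, add_assoc, hw, add_zero, hgab]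
          congr 1; omega
        · have : (k + 1) % (b - a) = k % (b - a) + 1 := by
            rw [← Nat.mod_add_mod]
            exact Nat.mod_eq_of_lt (by omega)
          rw [this, add_assoc]
      rw [hnext] at hE
      have hlt2 := Nat.mod_lt (k + 1) hP
      have := hα.step hE (hmem _ (by omega))
      push_cast
      rw [← add_assoc]
      exact ⟨_, this⟩
  obtain ⟨α, hα⟩ := main (M - L - a).toNat
  have e : L + a + ((M - L - a).toNat : ℤ) = M := by omega
  rw [e] at hα
  exact ⟨α, _, hα⟩

/-- Tiles of the simulated system. -/
def tl (k : ℕ) : TileType 1 := fun _ => ((default, k + 1), (default, k))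

theorem tl_inj {a b : ℕ} (h : tl a = tl b) : a = b := by
  have := congrFun h 0
  simp [tl] at this
  exact this

/-- The seed of the simulated system. -/
def sd : Config 1 := fun p => if p = pt 0 then some (tl 0) else none

theorem dom_sd : dom sd = {pt 0} := by
  ext p; simp [dom, sd]

/-- A system that grows a finite line of `N+1` distinct tiles. -/
def line (N : ℕ) : TAS 1 where
  tileset := (Finset.range (N + 1)).image tl
  seed := sd
  temp := 1
  temp_pos := one_pos
  seed_nonempty := by rw [dom_sd]; exact Set.singleton_nonempty _
  seed_connected := by
    rw [dom_sd]
    rintro p rfl q rfl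
    exact .refl
  seed_finite := by rw [dom_sd]; exact Set.finite_singleton _
  seed_tiles := by
    intro p t h
    unfold sd at h
    split_ifs at h
    simp only [Option.some.injEq] at h
    subst h
    exact Finset.mem_image_of_mem _ (by simp)
  seed_stable := by
    intro A B hA hB hd hU
    exfalso
    rw [dom_sd] at hU
    obtain ⟨a, ha⟩ := hA
    obtain ⟨b, hb⟩ := hB
    have h1 : a ∈ ({pt 0} : Set (Pt 1)) := hU ▸ Or.inl ha
    have h2 : b ∈ ({pt 0} : Set (Pt 1)) := hU ▸ Or.inr hb
    rw [Set.mem_singleton_iff] at h1 h2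
    subst h1; subst h2
    exact Set.disjoint_left.1 hd ha hb

theorem line_seed (N : ℕ) : (line N).seed = sd := rfl

theorem line_tip (N k : ℕ) (hk : k ≤ N) : ∃ α, Tip (line N) α k (tl k) := by
  induction k with
  | zero =>
    refine ⟨sd, .refl, by simp [sd], ?_⟩
    intro q hq
    rw [dom_sd, Set.mem_singleton_iff, pt_inj] at hq
    simp [hq]
  | succ k ih =>
    obtain ⟨α, hα⟩ := ih (by omega)
    have := hα.step (t' := tl (k + 1)) ⟨rfl, by simp [tl, line]⟩
        (Finset.mem_image_of_mem _ (by simp; omega))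
    push_cast
    exact ⟨_, this⟩

theorem line_inv (N : ℕ) {α : Config 1} (h : Reach (line N) (line N).seed α) :
    ∀ q t, α (pt q) = some t → ∃ k : ℕ, q = k ∧ k ≤ N ∧ t = tl k := by
  induction h with
  | refl =>
    intro q t h
    rw [line_seed] at h
    unfold sd at h
    split_ifs at h with hq
    rw [pt_inj] at hq
    exact ⟨0, hq, by omega, (Option.some.inj h).symm⟩
  | @tail b c h1 h2 ih =>
    have h0 : c (pt 0) = some (tl 0) := Reach.ext (h1.tail h2) _ _ (by simp [line_seed, sd])
    have hb0 : b (pt 0) = some (tl 0) := Reach.ext h1 _ _ (by simp [line_seed, sd])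
    have hst := reach_stable (h1.tail h2)
    obtain ⟨p, t', hp, ht', rfl, -⟩ := h2
    intro q t hq
    by_cases hqp : pt q = p
    · subst hqp
      have htt : t = t' := by simpa using hq.symm
      subst htt
      obtain ⟨k, hk, rfl⟩ := Finset.mem_image.1 ht'
      rw [Finset.mem_range] at hk
      rcases lt_trichotomy q 0 with hq0 | hq0 | hq0
      · exfalso
        obtain ⟨u, u', hu, hu', hE, -⟩ := cut one_pos hst (x := q) (y := 0) (i := q)
          (mem_dom.2 ⟨_, hq⟩) (mem_dom.2 ⟨_, h0⟩) le_rfl hq0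
        rw [hq] at hu
        obtain rfl := Option.some.inj hu
        rw [Function.update_of_ne (by rw [Ne, pt_inj]; omega)] at hu'
        obtain ⟨j, hj, -, rfl⟩ := ih _ _ hu'
        simp [tl] at hE
        omega
      · subst hq0
        exact absurd (mem_dom.2 ⟨_, hb0⟩) hp
      · obtain ⟨u, u', hu, hu', hE, -⟩ := cut one_pos hst (x := 0) (y := q) (i := q - 1)
          (mem_dom.2 ⟨_, h0⟩) (mem_dom.2 ⟨_, hq⟩) (by omega) (by omega)
        rw [sub_add_cancel, hq] at hu'
        obtain rfl := Option.some.inj hu'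
        rw [Function.update_of_ne (by rw [Ne, pt_inj]; omega)] at hu
        obtain ⟨j, hj, -, rfl⟩ := ih _ _ hu
        simp [tl] at hE
        exact ⟨k, by omega, by omega, rfl⟩
    · rw [Function.update_of_ne hqp] at hq
      exact ih q t hq

theorem line_bound (N : ℕ) {α : Config 1} (h : ProducesFrom (Attach (line N)) sd α)
    {q : ℤ} (hq : α (pt q) ≠ none) : 0 ≤ q ∧ q ≤ N := by
  obtain ⟨t, ht⟩ := Option.ne_none_iff_exists'.1 hq
  obtain ⟨γ, h1, h2⟩ := h.stage ht
  obtain ⟨k, hk, hk', -⟩ := line_inv N h1 q t h2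
  omega

theorem mblock_mono {m : ℕ} {α β : Config 1} (h : Extends α β) (x : Pt 1) :
    Extends (mblock m α x) (mblock m β x) := by
  intro y t hy
  unfold mblock at hy ⊢
  split_ifs at hy ⊢ with hc
  exact h _ _ hy

theorem repStar_mono {S : Finset (TileType 1)} {R : RepFn 1} (hR : ValidRep S R) {m : ℕ}
    {α β : Config 1} (h : Extends α β) : Extends (repStar R m α) (repStar R m β) :=
  fun x t hx => hR.1 _ _ (mblock_mono h x) t hx

theorem block_of_dom {m : ℕ} (hm : 0 < m) {α : Config 1} {q : ℤ} (hq : pt q ∈ dom α) :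
    NonemptyBlock m α (pt (q / m)) := by
  refine ⟨pt (q % m), ?_⟩
  have hm' : (m : ℤ) ≠ 0 := by omega
  unfold mblock
  rw [if_pos (fun i => ⟨Int.emod_nonneg _ hm', Int.emod_lt_of_pos _ (by omega)⟩)]
  have : (fun i => (m : ℤ) * pt (q / m) i + pt (q % m) i) = pt q := by
    funext i; simp only [pt_apply]; exact Int.mul_ediv_add_emod q m
  rw [this]
  exact hq

theorem dom_of_block {m : ℕ} {α : Config 1} {x : ℤ} (h : NonemptyBlock m α (pt x)) :
    ∃ q, pt q ∈ dom α ∧ m * x ≤ q ∧ q < m * x + m := by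
  obtain ⟨y, hy⟩ := h
  unfold mblock at hy
  split_ifs at hy with hc
  · have := hc 0
    exact ⟨m * x + y 0, by rw [pt_eta (fun i => (m : ℤ) * pt x i + y i)] at hy; exact hy,
      by omega, by omega⟩
  · exact absurd rfl hy

theorem block_of_rep {m : ℕ} {R : RepFn 1} (hR : R (fun _ => none) = none) {α : Config 1}
    {x : Pt 1} (h : repStar R m α x ≠ none) : NonemptyBlock m α x := by
  by_contra hc
  apply h
  unfold NonemptyBlock at hc
  push Not at hc
  unfold repStar
  rw [show mblock m α x = fun _ => none from funext hc, hR]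

theorem adj_pt {a : ℤ} {u : Pt 1} (h : adj (pt a) u) : |a - u 0| = 1 := by
  simpa [adj] using h

end ATAM

/-- **The 1D aTAM is not intrinsically universal.** There is no tile set `U`
of 1-dimensional tile types, temperature `τ' ∈ ℤ⁺`, and functions `Rfun` and
`Sfun` such that for every 1D aTAM system `T` there is `m` for which
`UT = (U, Sfun T, τ')` simulates `T` at scale `m` under `Rfun T`. -/
theorem oneD_aTAM_not_intrinsically_universal :
    ¬ ∃ (U : Finset (TileType 1)) (τ' : ℕ), 0 < τ' ∧
        ∃ (Rfun : TAS 1 → RepFn 1) (Sfun : TAS 1 → Config 1),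
          ∀ T : TAS 1, ∃ (UT : TAS 1) (m : ℕ), 0 < m ∧
            UT.tileset = U ∧ UT.seed = Sfun T ∧ UT.temp = τ' ∧
            ValidRep T.tileset (Rfun T) ∧ Simulates UT T (Rfun T) m := by
  rintro ⟨U, τ', hτ, Rfun, Sfun, H⟩
  set N : ℕ := U.card + 4 with hN
  obtain ⟨UT, m, hm, hU, -, -, hR, hsim⟩ := H (line N)
  set R := Rfun (line N)
  have hsd : ProducesFrom (Attach (line N)) sd sd := Reach.produces .refl
  have hss : ProducesFrom (Attach UT) UT.seed UT.seed := Reach.produces .refl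
  -- the represented seed
  have hdom0 : ∀ x : Pt 1, repStar R m UT.seed x ≠ none → x = pt 0 := by
    intro x hx
    obtain ⟨α', h1, h2⟩ := (hsim.prod_eq sd).1 hsd
    obtain ⟨t, ht⟩ := Option.ne_none_iff_exists'.1 hx
    have := repStar_mono hR h1.ext x t ht
    rw [h2] at this
    have hx' : x ∈ dom sd := mem_dom.2 ⟨t, this⟩
    rwa [dom_sd] at hx'
  have hrep0 : repStar R m UT.seed (pt 0) ≠ none := by
    have h1 := (hsim.prod_eq _).2 ⟨UT.seed, hss, rfl⟩
    rw [h1.ext (pt 0) (tl 0) (by simp [line_seed, sd])]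
    simp
  have hRn : R (fun _ => none) = none := by
    by_contra hc
    obtain ⟨t, ht⟩ := Option.ne_none_iff_exists'.1 hc
    have h1 : repStar R m UT.seed (pt 5) = some t :=
      hR.1 _ _ (fun p t h => by simp at h) t ht
    have := hdom0 (pt 5) (by rw [h1]; simp)
    rw [pt_inj] at this
    omega
  have hb0 : NonemptyBlock m UT.seed (pt 0) := block_of_rep hRn hrep0
  obtain ⟨s, hs, hs1, hs2⟩ := dom_of_block hb0
  have hmz : (0 : ℤ) < m := by exact_mod_cast hm
  have hL : ∀ q, pt q ∈ dom UT.seed → q < 2 * m := by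
    intro q hq
    have hq' := block_of_dom hm hq
    have hx : q / m ≤ 1 := by
      rcases hsim.clean _ hss with h | ⟨x₀, h⟩
      · rcases h _ hq' with h | ⟨u, hu, h⟩
        · have := hdom0 _ h
          rw [pt_inj] at this
          omega
        · have h3 := adj_pt hu
          rw [hdom0 _ h, pt_apply, sub_zero] at h3
          exact (abs_eq (by norm_num)).1 h3 |>.elim (by omega) (by omega)
      · have := (h _ hq').trans (h _ hb0).symm
        rw [pt_inj] at this
        omega
    have : q < (1 + 1) * m := (Int.ediv_lt_iff_lt_mul hmz).1 (by omega)
    linarith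
  -- a long assembly
  obtain ⟨α, hα, hαN, -⟩ := line_tip N N le_rfl
  obtain ⟨α', h1, h2⟩ := (hsim.prod_eq α).1 hα.produces
  have hbN : NonemptyBlock m α' (pt N) :=
    block_of_rep hRn (by rw [h2, hαN]; simp)
  obtain ⟨y, hy, hy1, hy2⟩ := dom_of_block hbN
  obtain ⟨t, ht⟩ := mem_dom.1 hy
  obtain ⟨γ, hγ, hγt⟩ := h1.stage ht
  obtain ⟨β, t', hβ, hβt, -⟩ := pump hL hs hγ (mem_dom.2 ⟨t, hγt⟩)
    (by rw [hU]; rw [hN] at hy1; push_cast at hy1; nlinarith) (m * (N + 2)) (by nlinarith)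
  have hβp := hβ.produces
  have hβb : NonemptyBlock m β (pt (N + 2)) := by
    have := block_of_dom hm (mem_dom.2 ⟨t', hβt⟩)
    rwa [Int.mul_ediv_cancel_left _ hmz.ne'] at this
  have hRβ := (hsim.prod_eq _).2 ⟨β, hβp, rfl⟩
  rw [line_seed] at hRβ
  rcases hsim.clean _ hβp with h | ⟨x₀, h⟩
  · rcases h _ hβb with h | ⟨u, hu, h⟩
    · have := line_bound N hRβ h
      omega
    · have h3 := adj_pt hu
      rw [pt_eta u] at h
      have := line_bound N hRβ h
      exact (abs_eq (by norm_num)).1 h3 |>.elim (by omega) (by omega)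
  · have hb0' : NonemptyBlock m β (pt 0) := by
      obtain ⟨t0, ht0⟩ := Option.ne_none_iff_exists'.1 hrep0
      apply block_of_rep hRn
      rw [repStar_mono hR hβp.ext _ _ ht0]
      simp
    have := (h _ hβb).trans (h _ hb0').symm
    rw [pt_inj] at this
    omega
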